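/- Let θ > 0 and, for each N ≥ 1, let α = α(N) > 0 be real and M = M(N) ≥ N an integer, with α(N)/N → α̂ ≥ 0 and M(N)/N → M̂ as N → ∞. Let y = y(N) be distributed as the β-Jacobi ensemble P_θ^{α,M,N}. Then for every positive integer k, lim_{N→∞} (1/N) E[𝔓_k(y)] = −(1/k) · (1/(2πi)) ∮ ( (v/(v+1)) · ((v − α̂)/(v − α̂ − M̂)) )^k dv, where the contour is a positively oriented circle centered at −1 of any radius r with 0 < r < 1 + α̂ + M̂ (so it encircles −1 but not α̂ + M̂). In particular the limit is independent of θ. -/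

import Mathlib

/-!
Flowing the points of the ensemble along the vector field `h t = t ^ (k + 1) - t ^ (k + 2)`, which
vanishes at both ends of `[0, 1]`, is a change of variables of the cube. Differentiating the
integral of a test function along this flow at time zero gives a Schwinger–Dyson equation: the
density and the Jacobian contribute only the divided differences of `h`, which are polynomials in
the power sums. Tested against `q_{k+1} - m_{k+1}`, where `q_j` is the `j`-th empirical moment, the
equation bounds the variance of `q_{k+1}` in terms of the lower moments, so by induction `q_k`
converges in `L²` to numbers `m_k` satisfying the limiting quadratic recursion.

The recursion says that `s = ∑ m_n u ^ n` solves `u s (s + a) = (s - 1) (s + a + b)`. Near `v = -1`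
this curve is parametrized by `s = -v` and `u = (v + 1) (v - a - b) / (v (v - a))`, so `m_k` is
`k⁻¹` times the residue of `-u ^ (-k) dv` at `-1`, as in Lagrange inversion.
-/

open MeasureTheory

/-- The (unnormalized) β-Jacobi density `∏_{i<j}|x_i−x_j|^{2θ} ∏_i x_i^{θα−1}(1−x_i)^{θ(M−N)+θ−1}`
with `β = 2θ`. -/
noncomputable def jacobiDensity (θ α : ℝ) (M N : ℕ) (x : Fin N → ℝ) : ℝ :=
  (∏ p ∈ Finset.univ.filter (fun p : Fin N × Fin N => p.1 < p.2),
      |x p.1 - x p.2| ^ (2 * θ)) *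
    ∏ i : Fin N, (x i ^ (θ * α - 1) * (1 - x i) ^ (θ * ((M : ℝ) - (N : ℝ)) + θ - 1))

/-- The unnormalized β-Jacobi measure on `[0,1]^N`. -/
noncomputable def jacobiMeasureRaw (θ α : ℝ) (M N : ℕ) : Measure (Fin N → ℝ) :=
  (volume.restrict (Set.univ.pi fun _ : Fin N => Set.Icc (0 : ℝ) 1)).withDensity
    fun x => ENNReal.ofReal (jacobiDensity θ α M N x)

/-- The β-Jacobi ensemble `P_θ^{α,M,N}`: the normalized β-Jacobi measure on `[0,1]^N`. -/
noncomputable def jacobiEnsemble (θ α : ℝ) (M N : ℕ) : Measure (Fin N → ℝ) :=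
  (jacobiMeasureRaw θ α M N Set.univ)⁻¹ • jacobiMeasureRaw θ α M N

namespace BetaJacobi

open Filter Topology Set

/-- The Selberg weight `∏_{i<j} |x_i - x_j|^γ ∏_i x_i^(a-1) (1-x_i)^(b-1)`: the β-Jacobi density in
the parameters in which the Schwinger-Dyson equation is simplest. -/
noncomputable def selbergWeight {N : ℕ} (γ a b : ℝ) (x : Fin N → ℝ) : ℝ :=
  (∏ p ∈ Finset.univ.filter (fun p : Fin N × Fin N => p.1 < p.2), |x p.1 - x p.2| ^ γ) *
    ∏ i, (x i ^ (a - 1) * (1 - x i) ^ (b - 1))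

/-- The unit cube `[0,1]^N`, which supports the Selberg weight. -/
def unitCube (N : ℕ) : Set (Fin N → ℝ) :=
  univ.pi fun _ => Icc 0 1

section Weight

variable {N : ℕ} {γ a b : ℝ} {x : Fin N → ℝ}

lemma isCompact_unitCube : IsCompact (unitCube N) :=
  isCompact_univ_pi fun _ => isCompact_Icc

lemma measurableSet_unitCube : MeasurableSet (unitCube N) :=
  MeasurableSet.univ_pi fun _ => measurableSet_Icc

@[fun_prop]
lemma measurable_selbergWeight : Measurable (selbergWeight (N := N) γ a b) := by
  unfold selbergWeight
  fun_prop

lemma selbergWeight_nonneg (hx : x ∈ unitCube N) : 0 ≤ selbergWeight γ a b x :=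
  mul_nonneg (Finset.prod_nonneg fun _ _ => Real.rpow_nonneg (abs_nonneg _) _) <|
    Finset.prod_nonneg fun i _ => mul_nonneg (Real.rpow_nonneg (hx i trivial).1 _)
      (Real.rpow_nonneg (sub_nonneg.2 (hx i trivial).2) _)

lemma selbergWeight_pos (hx : ∀ i, x i ∈ Ioo 0 1) (hinj : Function.Injective x) :
    0 < selbergWeight γ a b x := by
  refine mul_pos (Finset.prod_pos fun p hp => ?_) (Finset.prod_pos fun i _ => ?_)
  · have hne : p.1 ≠ p.2 := (Finset.mem_filter.1 hp).2.ne
    exact Real.rpow_pos_of_pos (abs_pos.2 (sub_ne_zero.2 (hinj.ne hne))) _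
  · exact mul_pos (Real.rpow_pos_of_pos (hx i).1 _)
      (Real.rpow_pos_of_pos (sub_pos.2 (hx i).2) _)

lemma integrableOn_rpow_mul_one_sub_rpow (ha : 0 < a) (hb : 0 < b) :
    IntegrableOn (fun t : ℝ => t ^ (a - 1) * (1 - t) ^ (b - 1)) (Icc 0 1) := by
  have hbeta := (Complex.betaIntegral_convergent (u := a) (v := b) (by simpa) (by simpa)).norm
  rw [intervalIntegrable_iff_integrableOn_Ioo_of_le zero_le_one] at hbeta
  rw [integrableOn_Icc_iff_integrableOn_Ioo]
  refine hbeta.congr_fun (fun t ht => ?_) measurableSet_Ioo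
  have hcast : (1 - (t : ℂ)) = ((1 - t : ℝ) : ℂ) := by push_cast; rfl
  simp only [norm_mul, hcast, Complex.norm_cpow_eq_rpow_re_of_pos ht.1,
    Complex.norm_cpow_eq_rpow_re_of_pos (sub_pos.2 ht.2), Complex.sub_re, Complex.ofReal_re,
    Complex.one_re]

lemma integrableOn_selbergWeight (hγ : 0 ≤ γ) (ha : 0 < a) (hb : 0 < b) :
    IntegrableOn (selbergWeight γ a b) (unitCube N) := by
  have hprod : IntegrableOn (fun x : Fin N → ℝ => ∏ i, (x i ^ (a - 1) * (1 - x i) ^ (b - 1)))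
      (unitCube N) := by
    rw [IntegrableOn, unitCube, volume_pi, Measure.restrict_pi_pi]
    exact Integrable.fintype_prod fun _ => integrableOn_rpow_mul_one_sub_rpow ha hb
  refine Integrable.mono hprod (by fun_prop)
    (ae_restrict_of_forall_mem measurableSet_unitCube fun x hx => ?_)
  have hdist (i j : Fin N) : |x i - x j| ≤ 1 := by
    have hi := hx i trivial
    have hj := hx j trivial
    exact abs_sub_le_iff.2 ⟨by linarith [hi.2, hj.1], by linarith [hj.2, hi.1]⟩
  have hinter_nonneg := Finset.prod_nonneg (s := Finset.univ.filter fun p : Fin N × Fin N =>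
    p.1 < p.2) fun p _ => Real.rpow_nonneg (abs_nonneg (x p.1 - x p.2)) γ
  rw [selbergWeight, norm_mul, Real.norm_of_nonneg hinter_nonneg]
  exact mul_le_of_le_one_left (norm_nonneg _) <| Finset.prod_le_one
    (fun _ _ => Real.rpow_nonneg (abs_nonneg _) _)
    fun p _ => Real.rpow_le_one (abs_nonneg _) (hdist p.1 p.2) hγ

lemma setLIntegral_selbergWeight_ne_zero :
    ∫⁻ x in unitCube N, ENNReal.ofReal (selbergWeight γ a b x) ≠ 0 := by
  let U : Set (Fin N → ℝ) := (univ.pi fun _ => Ioo 0 1) ∩ {x | Function.Injective x}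
  have hU_open : IsOpen U := by
    refine (isOpen_set_pi finite_univ fun _ _ => isOpen_Ioo).inter ?_
    simp only [Function.Injective, ofPred_forall, ← not_imp_not (b := _ = _)]
    exact isOpen_iInter_of_finite fun i => isOpen_iInter_of_finite fun j =>
      isOpen_iInter_of_finite fun _ => isOpen_ne_fun (by fun_prop) (by fun_prop)
  have hU_nonempty : U.Nonempty := by
    let f := (Ioo_infinite (zero_lt_one' ℝ)).natEmbedding
    exact ⟨fun i => f i, fun i _ => (f i).2,
      Subtype.val_injective.comp (f.injective.comp Fin.val_injective)⟩
  have hU_cube : U ⊆ unitCube N := fun x hx i hi => Ioo_subset_Icc_self (hx.1 i hi)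
  rw [← pos_iff_ne_zero, setLIntegral_pos_iff (by fun_prop)]
  refine (hU_open.measure_pos volume hU_nonempty).trans_le (measure_mono fun x hx => ?_)
  refine ⟨?_, hU_cube hx⟩
  simpa using selbergWeight_pos (fun i => hx.1 i trivial) hx.2

end Weight

section ChangeOfVariables

lemma setIntegral_piMap_image {ι E : Type*} [Fintype ι] [NormedAddCommGroup E] [NormedSpace ℝ E]
    {f f' : ι → ℝ → ℝ} {s : ι → Set ℝ} (hs : ∀ i, MeasurableSet (s i))
    (hf : ∀ i, ∀ t ∈ s i, HasDerivWithinAt (f i) (f' i t) (s i) t)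
    (hinj : ∀ i, InjOn (f i) (s i)) (g : (ι → ℝ) → E) :
    ∫ x in univ.pi fun i => f i '' s i, g x =
      ∫ x in univ.pi s, (∏ i, |f' i (x i)|) • g (fun i => f i (x i)) := by
  have hmeas : MeasurableSet (univ.pi s) := MeasurableSet.univ_pi hs
  have hderiv : ∀ x ∈ univ.pi s, HasFDerivWithinAt (Pi.map f)
      (ContinuousLinearMap.pi fun i =>
        (ContinuousLinearMap.toSpanSingleton ℝ (f' i (x i))).comp (.proj i)) (univ.pi s) x := by
    refine fun x hx => hasFDerivWithinAt_pi.2 fun i => ?_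
    exact (hf i _ (hx i trivial)).hasFDerivWithinAt.comp x
      (hasFDerivAt_apply i x).hasFDerivWithinAt fun y hy => hy i trivial
  have hinj' : InjOn (Pi.map f) (univ.pi s) := fun x hx y hy hxy =>
    funext fun i => hinj i (hx i trivial) (hy i trivial) (congrFun hxy i)
  rw [← piMap_image_univ_pi,
    integral_image_eq_integral_abs_det_fderiv_smul volume hmeas hderiv hinj']
  simp only [ContinuousLinearMap.det_pi, ContinuousLinearMap.det_toSpanSingleton, Finset.abs_prod]
  rfl

end ChangeOfVariables

/-- `D` is a continuous extension to the diagonal of the difference quotient of `h`. -/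
structure IsDividedDifference (D : ℝ → ℝ → ℝ) (h : ℝ → ℝ) : Prop where
  continuous_uncurry : Continuous (Function.uncurry D)
  sub_eq : ∀ s t, h s - h t = (s - t) * D s t

namespace IsDividedDifference

variable {D : ℝ → ℝ → ℝ} {h : ℝ → ℝ} {ε : ℝ}

lemma hasDerivAt (hD : IsDividedDifference D h) (t : ℝ) : HasDerivAt h (D t t) t := by
  refine hasDerivAt_iff_tendsto_slope.2 (Tendsto.congr' ?_ (f₁ := fun s => D s t) ?_)
  · filter_upwards [self_mem_nhdsWithin] with s hs
    rw [slope_def_field, hD.sub_eq, mul_div_cancel_left₀ _ (sub_ne_zero.2 hs)]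
  · have hcont : Continuous fun s => D s t :=
      hD.continuous_uncurry.comp (f := fun s => (s, t)) (by fun_prop)
    exact (hcont.tendsto t).mono_left nhdsWithin_le_nhds

lemma continuous (hD : IsDividedDifference D h) : Continuous h :=
  continuous_iff_continuousAt.2 fun t => (hD.hasDerivAt t).continuousAt

lemma exists_pos (hD : IsDividedDifference D h) {K : Set ℝ} (hK : IsCompact K) :
    ∃ δ > 0, ∀ ε ∈ Metric.closedBall (0 : ℝ) δ, ∀ s ∈ K, ∀ t ∈ K, 0 < 1 + ε * D s t := by
  obtain ⟨C, hC⟩ := (hK.prod hK).exists_bound_of_continuousOn hD.continuous_uncurry.continuousOn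
  refine ⟨(|C| + 1)⁻¹, by positivity, fun ε hε s hs t ht => ?_⟩
  have hε' : |ε| ≤ (|C| + 1)⁻¹ := by simpa using hε
  have hbound : |ε * D s t| < 1 := calc
    |ε * D s t| = |ε| * |D s t| := abs_mul _ _
    _ ≤ (|C| + 1)⁻¹ * |C| := mul_le_mul hε' ((hC (s, t) ⟨hs, ht⟩).trans (le_abs_self C))
      (abs_nonneg _) (by positivity)
    _ < 1 := by rw [inv_mul_lt_one₀ (by positivity)]; linarith
  linarith [(abs_lt.1 hbound).1]

lemma deform_sub (hD : IsDividedDifference D h) (ε s t : ℝ) :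
    (s + ε * h s) - (t + ε * h t) = (s - t) * (1 + ε * D s t) := by
  linear_combination ε * hD.sub_eq s t

lemma deform_eq_mul (hD : IsDividedDifference D h) (h0 : h 0 = 0) (ε t : ℝ) :
    t + ε * h t = t * (1 + ε * D t 0) := by
  simpa [h0] using hD.deform_sub ε t 0

lemma one_sub_deform_eq_mul (hD : IsDividedDifference D h) (h1 : h 1 = 0) (ε t : ℝ) :
    1 - (t + ε * h t) = (1 - t) * (1 + ε * D t 1) := by
  linear_combination -hD.deform_sub ε t 1 - ε * h1

variable (hpos : ∀ s ∈ Icc (0 : ℝ) 1, ∀ t ∈ Icc (0 : ℝ) 1, 0 < 1 + ε * D s t)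
include hpos

lemma injOn_deform (hD : IsDividedDifference D h) :
    InjOn (fun t => t + ε * h t) (Icc 0 1) := fun s hs t ht hst => by
  have hzero : (s - t) * (1 + ε * D s t) = 0 := by rw [← hD.deform_sub, sub_eq_zero.2 hst]
  exact sub_eq_zero.1 ((mul_eq_zero_iff_right (hpos s hs t ht).ne').1 hzero)

lemma image_deform (hD : IsDividedDifference D h) (h0 : h 0 = 0) (h1 : h 1 = 0) :
    (fun t => t + ε * h t) '' Icc 0 1 = Icc 0 1 := by
  refine Subset.antisymm (image_subset_iff.2 fun t ht => ⟨?_, sub_nonneg.1 ?_⟩) ?_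
  · exact (mul_nonneg ht.1 (hpos t ht 0 (by simp)).le).trans_eq (hD.deform_eq_mul h0 ε t).symm
  · exact (mul_nonneg (sub_nonneg.2 ht.2) (hpos t ht 1 (by simp)).le).trans_eq
      (hD.one_sub_deform_eq_mul h1 ε t).symm
  · have hcont : Continuous fun t => t + ε * h t :=
      continuous_id.add (continuous_const.mul hD.continuous)
    simpa [h0, h1] using intermediate_value_Icc zero_le_one hcont.continuousOn

lemma setIntegral_deform {N : ℕ} (hD : IsDividedDifference D h) (h0 : h 0 = 0) (h1 : h 1 = 0)
    (g : (Fin N → ℝ) → ℝ) :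
    ∫ x in unitCube N, g x =
      ∫ x in unitCube N, (∏ i, (1 + ε * D (x i) (x i))) * g (fun i => x i + ε * h (x i)) := by
  have hderiv : ∀ t ∈ Icc (0 : ℝ) 1,
      HasDerivWithinAt (fun t => t + ε * h t) (1 + ε * D t t) (Icc 0 1) t :=
    fun t _ => ((hasDerivAt_id t).add ((hD.hasDerivAt t).const_mul ε)).hasDerivWithinAt
  have hchange := setIntegral_piMap_image (ι := Fin N) (fun _ => measurableSet_Icc)
    (fun _ => hderiv) (fun _ => hD.injOn_deform hpos) g
  simp only [hD.image_deform hpos h0 h1] at hchange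
  refine hchange.trans (setIntegral_congr_fun measurableSet_unitCube fun x hx => ?_)
  simp only [smul_eq_mul]
  exact congrArg (· * _) (Finset.prod_congr rfl fun i _ =>
    abs_of_pos (hpos _ (hx i trivial) _ (hx i trivial)))

end IsDividedDifference

section ParametricIntegral

lemma hasDerivAt_setIntegral_mul_of_isCompact {X : Type*} [TopologicalSpace X] [T2Space X]
    [MeasurableSpace X] [OpensMeasurableSpace X] {μ : Measure X} {K : Set X} (hK : IsCompact K)
    {w : X → ℝ} (hw : IntegrableOn w K μ) {G G' : ℝ → X → ℝ} {ε₀ δ : ℝ} (hδ : 0 < δ)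
    (hG : ∀ ε ∈ Metric.closedBall ε₀ δ, ContinuousOn (G ε) K)
    (hG' : ContinuousOn (Function.uncurry G') (Metric.closedBall ε₀ δ ×ˢ K))
    (hderiv : ∀ ε ∈ Metric.closedBall ε₀ δ, ∀ x ∈ K, HasDerivAt (G · x) (G' ε x) ε) :
    HasDerivAt (fun ε => ∫ x in K, w x * G ε x ∂μ) (∫ x in K, w x * G' ε₀ x ∂μ) ε₀ := by
  have hball : Metric.closedBall ε₀ δ ∈ 𝓝 ε₀ := Metric.closedBall_mem_nhds _ hδ
  have hmem := mem_of_mem_nhds hball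
  obtain ⟨C, hC⟩ := ((isCompact_closedBall ε₀ δ).prod hK).exists_bound_of_continuousOn hG'
  have hint (g : X → ℝ) (hg : ContinuousOn g K) : IntegrableOn (fun x => w x * g x) K μ :=
    hw.mul_continuousOn hg hK
  have hG'₀ : ContinuousOn (G' ε₀) K :=
    hG'.comp (f := fun x => (ε₀, x)) (by fun_prop) fun x hx => ⟨hmem, hx⟩
  refine (hasDerivAt_integral_of_dominated_loc_of_deriv_le (bound := fun x => ‖w x‖ * C) hball
    (F := fun ε x => w x * G ε x) (F' := fun ε x => w x * G' ε x)
    ?_ (hint _ (hG ε₀ hmem)) (hint _ hG'₀).aestronglyMeasurable ?_ (hw.norm.mul_const C) ?_).2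
  · filter_upwards [hball] with ε hε using (hint _ (hG ε hε)).aestronglyMeasurable
  · refine ae_restrict_of_forall_mem hK.measurableSet fun x hx ε hε => ?_
    rw [norm_mul]
    exact mul_le_mul_of_nonneg_left (hC (ε, x) ⟨hε, hx⟩) (norm_nonneg _)
  · exact ae_restrict_of_forall_mem hK.measurableSet fun x hx ε hε =>
      (hderiv ε hε x hx).const_mul (w x)

lemma hasDerivAt_prod_one_add_mul_rpow {κ : Type*} [Fintype κ] (e c : κ → ℝ) {ε : ℝ}
    (hpos : ∀ j, 0 < 1 + ε * e j) :
    HasDerivAt (fun ε => ∏ j, (1 + ε * e j) ^ c j)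
      ((∏ j, (1 + ε * e j) ^ c j) * ∑ j, c j * e j / (1 + ε * e j)) ε := by
  classical
  have hfactor (j : κ) : HasDerivAt (fun ε => (1 + ε * e j) ^ c j)
      ((1 + ε * e j) ^ c j * (c j * e j / (1 + ε * e j))) ε := by
    refine ((((hasDerivAt_id' ε).mul_const (e j)).const_add 1).rpow_const
      (p := c j) (Or.inl (hpos j).ne')).congr_deriv ?_
    rw [Real.rpow_sub_one (hpos j).ne']
    ring
  refine (HasDerivAt.fun_finsetProd (u := Finset.univ) fun j _ => hfactor j).congr_deriv ?_
  rw [Finset.mul_sum]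
  refine Finset.sum_congr rfl fun j hj => ?_
  rw [← Finset.mul_prod_erase _ _ hj, smul_eq_mul]
  ring

lemma hasDerivAt_setIntegral_mul_prod_rpow {X κ : Type*} [Fintype κ] [TopologicalSpace X]
    [T2Space X] [MeasurableSpace X] [OpensMeasurableSpace X] {μ : Measure X} {K : Set X}
    (hK : IsCompact K) {w : X → ℝ} (hw : IntegrableOn w K μ) {H H' : ℝ → X → ℝ}
    (hH : Continuous (Function.uncurry H)) (hH' : Continuous (Function.uncurry H'))
    (hderiv : ∀ ε x, HasDerivAt (H · x) (H' ε x) ε) {e : X → κ → ℝ}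
    (he : ∀ j, Continuous fun x => e x j) (c : κ → ℝ) {δ : ℝ} (hδ : 0 < δ)
    (hpos : ∀ ε ∈ Metric.closedBall (0 : ℝ) δ, ∀ x ∈ K, ∀ j, 0 < 1 + ε * e x j) :
    HasDerivAt (fun ε => ∫ x in K, w x * (H ε x * ∏ j, (1 + ε * e x j) ^ c j) ∂μ)
      (∫ x in K, w x * (H' 0 x + H 0 x * ∑ j, c j * e x j) ∂μ) 0 := by
  let P (ε : ℝ) (x : X) : ℝ := ∏ j, (1 + ε * e x j) ^ c j
  let S (ε : ℝ) (x : X) : ℝ := ∑ j, c j * e x j / (1 + ε * e x j)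
  have hP : ContinuousOn (Function.uncurry P) (Metric.closedBall (0 : ℝ) δ ×ˢ K) :=
    continuousOn_finsetProd _ fun j _ => ContinuousOn.rpow_const (by fun_prop)
      fun p hp => Or.inl (hpos p.1 hp.1 p.2 hp.2 j).ne'
  have hS : ContinuousOn (Function.uncurry S) (Metric.closedBall (0 : ℝ) δ ×ˢ K) :=
    continuousOn_finsetSum _ fun j _ => ContinuousOn.div (by fun_prop) (by fun_prop)
      fun p hp => (hpos p.1 hp.1 p.2 hp.2 j).ne'
  have hmain := hasDerivAt_setIntegral_mul_of_isCompact (ε₀ := 0) hK hw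
    (G := fun ε x => H ε x * P ε x) (G' := fun ε x => H' ε x * P ε x + H ε x * (P ε x * S ε x)) hδ
    (fun ε hε => (hH.continuousOn.mul hP).comp (f := fun x => (ε, x)) (by fun_prop)
      fun x hx => ⟨hε, hx⟩)
    ((hH'.continuousOn.mul hP).add (hH.continuousOn.mul (hP.mul hS)))
    (fun ε hε x hx => (hderiv ε x).mul
      (hasDerivAt_prod_one_add_mul_rpow (e x) c (hpos ε hε x hx)))
  simpa only [P, S, zero_mul, add_zero, Real.one_rpow, Finset.prod_const_one, mul_one, one_mul,
    div_one] using hmain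

end ParametricIntegral

section SchwingerDyson

variable {N : ℕ} {D : ℝ → ℝ → ℝ} {h : ℝ → ℝ} {γ a b : ℝ}

/-- Under the flow `t ↦ t + ε h t`, the Selberg weight times the Jacobian determinant is multiplied
by factors `(1 + ε e_j) ^ c_j`; the index `j` runs over the pairs, over the particles twice for the
two endpoints, and over the particles once more for the Jacobian. -/
abbrev DeformIndex (N : ℕ) : Type :=
  {p : Fin N × Fin N // p.1 < p.2} ⊕ Fin N ⊕ Fin N ⊕ Fin N

/-- The rate `e_j` of the factor `(1 + ε e_j) ^ c_j` indexed by `j : DeformIndex N`. -/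
def deformRate (D : ℝ → ℝ → ℝ) (x : Fin N → ℝ) : DeformIndex N → ℝ :=
  Sum.elim (fun p => D (x p.1.1) (x p.1.2)) <|
    Sum.elim (fun i => D (x i) 0) <| Sum.elim (fun i => D (x i) 1) fun i => D (x i) (x i)

/-- The exponent `c_j` of the factor `(1 + ε e_j) ^ c_j` indexed by `j : DeformIndex N`. -/
def deformExponent (N : ℕ) (γ a b : ℝ) : DeformIndex N → ℝ :=
  Sum.elim (fun _ => γ) <| Sum.elim (fun _ => a - 1) <| Sum.elim (fun _ => b - 1) fun _ => 1

/-- The logarithmic derivative at `ε = 0` of the Selberg weight times the Jacobian determinant along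
the flow `t ↦ t + ε h t`, where `D` is the divided difference of `h`. -/
noncomputable def deformScore (D : ℝ → ℝ → ℝ) (γ a b : ℝ) (x : Fin N → ℝ) : ℝ :=
  γ * ∑ p ∈ Finset.univ.filter (fun p : Fin N × Fin N => p.1 < p.2), D (x p.1) (x p.2) +
    ∑ i, ((a - 1) * D (x i) 0 + (b - 1) * D (x i) 1 + D (x i) (x i))

lemma sum_deformExponent_mul_deformRate (x : Fin N → ℝ) :
    ∑ j, deformExponent N γ a b j * deformRate D x j = deformScore D γ a b x := by
  simp only [deformExponent, deformRate, deformScore, Fintype.sum_sum_type, Sum.elim_inl,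
    Sum.elim_inr, ← Finset.mul_sum, one_mul, Finset.sum_add_distrib, ← add_assoc]
  rw [Finset.sum_subtype (Finset.univ.filter fun p : Fin N × Fin N => p.1 < p.2)
    (fun _ => Finset.mem_filter_univ _) fun p => D (x p.1) (x p.2)]

lemma IsDividedDifference.continuous_deformRate (hD : IsDividedDifference D h)
    (j : DeformIndex N) : Continuous fun x => deformRate D x j := by
  have hcomp {f g : (Fin N → ℝ) → ℝ} (hf : Continuous f) (hg : Continuous g) :
      Continuous fun x => D (f x) (g x) := hD.continuous_uncurry.comp (hf.prodMk hg)
  rcases j with p | i | i | i <;> exact hcomp (by fun_prop) (by fun_prop)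

lemma deformRate_pos {ε : ℝ}
    (hpos : ∀ s ∈ Icc (0 : ℝ) 1, ∀ t ∈ Icc (0 : ℝ) 1, 0 < 1 + ε * D s t)
    {x : Fin N → ℝ} (hx : x ∈ unitCube N) (j : DeformIndex N) : 0 < 1 + ε * deformRate D x j := by
  have hxi (i : Fin N) : x i ∈ Icc (0 : ℝ) 1 := hx i trivial
  rcases j with p | i | i | i <;> exact hpos _ (hxi _) _ (by simp [hxi])

lemma IsDividedDifference.selbergWeight_deform (hD : IsDividedDifference D h) (h0 : h 0 = 0)
    (h1 : h 1 = 0) {ε : ℝ}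
    (hpos : ∀ s ∈ Icc (0 : ℝ) 1, ∀ t ∈ Icc (0 : ℝ) 1, 0 < 1 + ε * D s t)
    {x : Fin N → ℝ} (hx : x ∈ unitCube N) :
    (∏ i, (1 + ε * D (x i) (x i))) * selbergWeight γ a b (fun i => x i + ε * h (x i)) =
      selbergWeight γ a b x * ∏ j, (1 + ε * deformRate D x j) ^ deformExponent N γ a b j := by
  have hxi (i : Fin N) : x i ∈ Icc (0 : ℝ) 1 := hx i trivial
  have hpair (i j : Fin N) : |(x i + ε * h (x i)) - (x j + ε * h (x j))| ^ γ =
      |x i - x j| ^ γ * (1 + ε * D (x i) (x j)) ^ γ := by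
    have hp := hpos _ (hxi i) _ (hxi j)
    rw [hD.deform_sub, abs_mul, abs_of_pos hp, Real.mul_rpow (abs_nonneg _) hp.le]
  have hleft (i : Fin N) : (x i + ε * h (x i)) ^ (a - 1) =
      x i ^ (a - 1) * (1 + ε * D (x i) 0) ^ (a - 1) := by
    rw [hD.deform_eq_mul h0, Real.mul_rpow (hxi i).1 (hpos _ (hxi i) 0 (by simp)).le]
  have hright (i : Fin N) : (1 - (x i + ε * h (x i))) ^ (b - 1) =
      (1 - x i) ^ (b - 1) * (1 + ε * D (x i) 1) ^ (b - 1) := by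
    rw [hD.one_sub_deform_eq_mul h1, Real.mul_rpow (sub_nonneg.2 (hxi i).2)
      (hpos _ (hxi i) 1 (by simp)).le]
  simp only [selbergWeight, hpair, hleft, hright, deformRate, deformExponent,
    Fintype.prod_sum_type, Sum.elim_inl, Sum.elim_inr, Real.rpow_one, Finset.prod_mul_distrib]
  rw [Finset.prod_subtype (Finset.univ.filter fun p : Fin N × Fin N => p.1 < p.2)
    (fun _ => Finset.mem_filter_univ _) fun p => (1 + ε * D (x p.1) (x p.2)) ^ γ]
  ring

lemma IsDividedDifference.setIntegral_selbergWeight_deform (hD : IsDividedDifference D h)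
    (h0 : h 0 = 0) (h1 : h 1 = 0) {ε : ℝ}
    (hpos : ∀ s ∈ Icc (0 : ℝ) 1, ∀ t ∈ Icc (0 : ℝ) 1, 0 < 1 + ε * D s t)
    (F : (Fin N → ℝ) → ℝ) :
    ∫ x in unitCube N, selbergWeight γ a b x * (F (fun i => x i + ε * h (x i)) *
        ∏ j, (1 + ε * deformRate D x j) ^ deformExponent N γ a b j) =
      ∫ x in unitCube N, selbergWeight γ a b x * F x := by
  rw [hD.setIntegral_deform hpos h0 h1 fun x => selbergWeight γ a b x * F x]
  refine setIntegral_congr_fun measurableSet_unitCube fun x hx => ?_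
  have hw := hD.selbergWeight_deform (γ := γ) (a := a) (b := b) h0 h1 hpos hx
  linear_combination -F (fun i => x i + ε * h (x i)) * hw

lemma IsDividedDifference.hasDerivAt_setIntegral_selbergWeight_deform
    (hD : IsDividedDifference D h) (hγ : 0 ≤ γ) (ha : 0 < a) (hb : 0 < b)
    {F : (Fin N → ℝ) → ℝ} {F' : (Fin N → ℝ) → (Fin N → ℝ) →L[ℝ] ℝ}
    (hF : ∀ x, HasFDerivAt F (F' x) x) (hF' : Continuous F') :
    HasDerivAt (fun ε => ∫ x in unitCube N,
        selbergWeight γ a b x * (F (fun i => x i + ε * h (x i)) *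
          ∏ j, (1 + ε * deformRate D x j) ^ deformExponent N γ a b j))
      (∫ x in unitCube N, selbergWeight γ a b x *
        (F' x (fun i => h (x i)) + F x * deformScore D γ a b x)) 0 := by
  obtain ⟨δ, hδ, hpos⟩ := hD.exists_pos (K := Icc 0 1) isCompact_Icc
  have hF_cont : Continuous F := continuous_iff_continuousAt.2 fun x => (hF x).continuousAt
  have hh : Continuous h := hD.continuous
  let Φ (ε : ℝ) (x : Fin N → ℝ) : Fin N → ℝ := fun i => x i + ε * h (x i)
  have hΦ (ε : ℝ) (x : Fin N → ℝ) : HasDerivAt (Φ · x) (fun i => h (x i)) ε :=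
    hasDerivAt_pi.2 fun i => by
      simpa [Φ] using ((hasDerivAt_id' ε).mul_const (h (x i))).const_add (x i)
  have hΦ_cont : Continuous (Function.uncurry Φ) := by
    unfold Function.uncurry
    fun_prop
  have hmain := hasDerivAt_setIntegral_mul_prod_rpow isCompact_unitCube
    (integrableOn_selbergWeight hγ ha hb) (H := fun ε x => F (Φ ε x))
    (H' := fun ε x => F' (Φ ε x) fun i => h (x i)) (hF_cont.comp hΦ_cont)
    ((hF'.comp hΦ_cont).clm_apply (by fun_prop)) (fun ε x => (hF _).comp_hasDerivAt ε (hΦ ε x))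
    hD.continuous_deformRate (deformExponent N γ a b) hδ
    fun ε hε x hx => deformRate_pos (hpos ε hε) hx
  simpa only [Φ, sum_deformExponent_mul_deformRate, zero_mul, add_zero] using hmain

theorem IsDividedDifference.schwingerDyson (hD : IsDividedDifference D h) (h0 : h 0 = 0)
    (h1 : h 1 = 0) (hγ : 0 ≤ γ) (ha : 0 < a) (hb : 0 < b)
    {F : (Fin N → ℝ) → ℝ} {F' : (Fin N → ℝ) → (Fin N → ℝ) →L[ℝ] ℝ}
    (hF : ∀ x, HasFDerivAt F (F' x) x) (hF' : Continuous F') :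
    ∫ x in unitCube N, selbergWeight γ a b x *
      (F' x (fun i => h (x i)) + F x * deformScore D γ a b x) = 0 := by
  obtain ⟨δ, hδ, hpos⟩ := hD.exists_pos (K := Icc 0 1) isCompact_Icc
  have hconst := hasDerivAt_const (0 : ℝ) (∫ x in unitCube N, selbergWeight γ a b x * F x)
  refine (hD.hasDerivAt_setIntegral_selbergWeight_deform hγ ha hb hF hF').unique <|
    hconst.congr_of_eventuallyEq <|
      eventually_of_mem (Metric.closedBall_mem_nhds (0 : ℝ) hδ) fun ε hε => ?_
  exact hD.setIntegral_selbergWeight_deform h0 h1 (hpos ε hε) F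

end SchwingerDyson

section Ensemble

variable {θ α : ℝ} {M N : ℕ}

lemma jacobiDensity_eq_selbergWeight :
    jacobiDensity θ α M N = selbergWeight (2 * θ) (θ * α) (θ * ((M : ℝ) - N) + θ) :=
  rfl

lemma jacobiMeasureRaw_univ : jacobiMeasureRaw θ α M N univ =
    ∫⁻ x in unitCube N, ENNReal.ofReal (jacobiDensity θ α M N x) := by
  rw [jacobiMeasureRaw, withDensity_apply _ MeasurableSet.univ, Measure.restrict_univ, unitCube]

lemma right_exponent_pos (hθ : 0 < θ) (hM : N ≤ M) : 0 < θ * ((M : ℝ) - N) + θ := by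
  have hMN : (0 : ℝ) ≤ M - N := sub_nonneg.2 (by exact_mod_cast hM)
  positivity

lemma isProbabilityMeasure_jacobiEnsemble (hθ : 0 < θ) (hα : 0 < α) (hM : N ≤ M) :
    IsProbabilityMeasure (jacobiEnsemble θ α M N) := by
  have hint : IntegrableOn (jacobiDensity θ α M N) (unitCube N) :=
    integrableOn_selbergWeight (by positivity) (by positivity) (right_exponent_pos hθ hM)
  refine ⟨?_⟩
  rw [jacobiEnsemble, Measure.smul_apply, smul_eq_mul, jacobiMeasureRaw_univ]
  exact ENNReal.inv_mul_cancel setLIntegral_selbergWeight_ne_zero hint.lintegral_lt_top.ne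

lemma ae_jacobiEnsemble_mem_unitCube : ∀ᵐ x ∂jacobiEnsemble θ α M N, x ∈ unitCube N :=
  Measure.ae_smul_measure
    ((withDensity_absolutelyContinuous _ _) (ae_restrict_mem measurableSet_unitCube)) _

lemma integral_jacobiEnsemble (f : (Fin N → ℝ) → ℝ) :
    ∫ x, f x ∂jacobiEnsemble θ α M N = ((jacobiMeasureRaw θ α M N univ)⁻¹).toReal *
      ∫ x in unitCube N, jacobiDensity θ α M N x * f x := by
  have hmeas : Measurable fun x => ENNReal.ofReal (jacobiDensity θ α M N x) :=
    measurable_selbergWeight.ennreal_ofReal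
  rw [jacobiEnsemble, integral_smul_measure, smul_eq_mul, jacobiMeasureRaw,
    integral_withDensity_eq_integral_toReal_smul hmeas (by simp)]
  refine congrArg _ (setIntegral_congr_fun measurableSet_unitCube fun x hx => ?_)
  exact congrArg (· * f x) (ENNReal.toReal_ofReal (selbergWeight_nonneg hx))

lemma IsDividedDifference.schwingerDyson_jacobiEnsemble {D : ℝ → ℝ → ℝ} {h : ℝ → ℝ}
    (hD : IsDividedDifference D h) (h0 : h 0 = 0) (h1 : h 1 = 0) (hθ : 0 < θ) (hα : 0 < α)
    (hM : N ≤ M) {F : (Fin N → ℝ) → ℝ} {F' : (Fin N → ℝ) → (Fin N → ℝ) →L[ℝ] ℝ}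
    (hF : ∀ x, HasFDerivAt F (F' x) x) (hF' : Continuous F') :
    ∫ x, (F' x (fun i => h (x i)) +
        F x * deformScore D (2 * θ) (θ * α) (θ * ((M : ℝ) - N) + θ) x) ∂jacobiEnsemble θ α M N =
      0 := by
  rw [integral_jacobiEnsemble, jacobiDensity_eq_selbergWeight,
    hD.schwingerDyson h0 h1 (by positivity) (by positivity) (right_exponent_pos hθ hM) hF hF',
    mul_zero]

end Ensemble

section LoopEquation

/-- The loop polynomial: the equilibrium equations of the moments are
`(a + b + 1) m_{k+1} = loopPoly a m k`. -/
noncomputable def loopPoly (a : ℝ) (m : ℕ → ℝ) (k : ℕ) : ℝ :=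
  a * m k + ∑ l ∈ Finset.range (k + 1), m l * m (k - l) -
    ∑ l ∈ Finset.range k, m (l + 1) * m (k - l)

lemma sum_range_mul_of_zero_eq_one {m : ℕ → ℝ} (hm : m 0 = 1) (k : ℕ) :
    ∑ l ∈ Finset.range (k + 2), m l * m (k + 1 - l) =
      2 * m (k + 1) + ∑ l ∈ Finset.range k, m (l + 1) * m (k - l) := by
  rw [Finset.sum_range_succ, Finset.sum_range_succ']
  simp only [Nat.add_sub_add_right, Nat.sub_zero, Nat.sub_self, hm]
  ring

/-- The `k`-th moment of the empirical measure of the points `x i`. -/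
noncomputable def empiricalMoment {N : ℕ} (x : Fin N → ℝ) (k : ℕ) : ℝ :=
  (∑ i, x i ^ k) / N

/-- The divided difference of `t ↦ t ^ n`. -/
def powDivDiff (n : ℕ) (s t : ℝ) : ℝ :=
  ∑ l ∈ Finset.range n, s ^ l * t ^ (n - 1 - l)

/-- The divided difference of the vector field `t ↦ t ^ (k + 1) - t ^ (k + 2)`, which vanishes at
both endpoints of the unit interval. -/
def loopDivDiff (k : ℕ) (s t : ℝ) : ℝ :=
  powDivDiff (k + 1) s t - powDivDiff (k + 2) s t

lemma isDividedDifference_pow (n : ℕ) : IsDividedDifference (powDivDiff n) (· ^ n) where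
  continuous_uncurry := by
    unfold powDivDiff Function.uncurry
    fun_prop
  sub_eq s t := by
    rw [powDivDiff, mul_comm, geom_sum₂_mul]

lemma isDividedDifference_loopDivDiff (k : ℕ) :
    IsDividedDifference (loopDivDiff k) fun t => t ^ (k + 1) - t ^ (k + 2) where
  continuous_uncurry :=
    (isDividedDifference_pow (k + 1)).continuous_uncurry.sub
      (isDividedDifference_pow (k + 2)).continuous_uncurry
  sub_eq s t := by
    rw [loopDivDiff]
    linear_combination (isDividedDifference_pow (k + 1)).sub_eq s t -
      (isDividedDifference_pow (k + 2)).sub_eq s t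

lemma powDivDiff_succ_zero_right (n : ℕ) (t : ℝ) : powDivDiff (n + 1) t 0 = t ^ n := by
  rw [powDivDiff, Finset.sum_range_succ, Finset.sum_eq_zero fun l hl => ?_]
  · simp
  · have hl : n + 1 - 1 - l ≠ 0 := by have := Finset.mem_range.1 hl; omega
    rw [zero_pow hl, mul_zero]

lemma loopDivDiff_zero_right (k : ℕ) (t : ℝ) : loopDivDiff k t 0 = t ^ k - t ^ (k + 1) := by
  simp only [loopDivDiff, powDivDiff_succ_zero_right]

lemma loopDivDiff_one_right (k : ℕ) (t : ℝ) : loopDivDiff k t 1 = -t ^ (k + 1) := by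
  simp only [loopDivDiff, powDivDiff, one_pow, mul_one, Finset.sum_range_succ _ (k + 1)]
  ring

lemma powDivDiff_self (n : ℕ) (t : ℝ) : powDivDiff n t t = n * t ^ (n - 1) := by
  have hterm : ∀ l ∈ Finset.range n, t ^ l * t ^ (n - 1 - l) = t ^ (n - 1) := fun l hl => by
    rw [← pow_add, Nat.add_sub_cancel' (Nat.le_sub_one_of_lt (Finset.mem_range.1 hl))]
  rw [powDivDiff, Finset.sum_congr rfl hterm, Finset.sum_const, Finset.card_range, nsmul_eq_mul]

lemma powDivDiff_comm (n : ℕ) (s t : ℝ) : powDivDiff n s t = powDivDiff n t s := by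
  rw [powDivDiff, ← Finset.sum_range_reflect]
  refine Finset.sum_congr rfl fun l hl => ?_
  have hl : n - 1 - (n - 1 - l) = l := by have := Finset.mem_range.1 hl; omega
  rw [hl, mul_comm]

lemma two_mul_sum_lt_eq_sum_sum_sub_sum_diag {ι : Type*} [Fintype ι] [LinearOrder ι]
    {f : ι → ι → ℝ} (hf : ∀ i j, f i j = f j i) :
    2 * ∑ p ∈ Finset.univ.filter (fun p : ι × ι => p.1 < p.2), f p.1 p.2 =
      ∑ i, ∑ j, f i j - ∑ i, f i i := by
  have hsplit (i j : ι) : f i j = (if i < j then f i j else 0) + (if j < i then f j i else 0) +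
      if i = j then f i i else 0 := by
    rcases lt_trichotomy i j with hij | rfl | hij
    · simp [hij, hij.ne, hij.not_gt]
    · simp
    · simp [hij, hij.ne', hij.not_gt, hf i j]
  have hlt : ∑ p ∈ Finset.univ.filter (fun p : ι × ι => p.1 < p.2), f p.1 p.2 =
      ∑ i, ∑ j, if i < j then f i j else 0 := by
    rw [Finset.sum_filter, Fintype.sum_prod_type]
  have hgt : ∑ i, ∑ j, (if j < i then f j i else 0) =
      ∑ i, ∑ j, if i < j then f i j else 0 := Finset.sum_comm
  rw [Finset.sum_congr rfl fun i _ => Finset.sum_congr rfl fun j _ => hsplit i j]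
  simp only [Finset.sum_add_distrib, hgt, hlt, Finset.sum_ite_eq, Finset.mem_univ, if_true]
  ring

variable {N : ℕ}

lemma sum_pow_eq_mul_empiricalMoment (x : Fin N → ℝ) (k : ℕ) :
    ∑ i, x i ^ k = N * empiricalMoment x k := by
  rcases eq_or_ne N 0 with rfl | hN
  · simp
  · rw [empiricalMoment, mul_div_cancel₀ _ (by exact_mod_cast hN)]

lemma empiricalMoment_zero (hN : N ≠ 0) (x : Fin N → ℝ) : empiricalMoment x 0 = 1 := by
  simp [empiricalMoment, hN]

lemma sum_sum_powDivDiff (x : Fin N → ℝ) (n : ℕ) :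
    ∑ i, ∑ j, powDivDiff n (x i) (x j) =
      N ^ 2 * ∑ l ∈ Finset.range n, empiricalMoment x l * empiricalMoment x (n - 1 - l) := by
  have hrow (i : Fin N) : ∑ j, powDivDiff n (x i) (x j) =
      ∑ l ∈ Finset.range n, x i ^ l * ∑ j, x j ^ (n - 1 - l) := by
    simp only [powDivDiff, Finset.mul_sum]
    exact Finset.sum_comm
  simp only [hrow]
  rw [Finset.sum_comm, Finset.mul_sum]
  refine Finset.sum_congr rfl fun l _ => ?_
  rw [← Finset.sum_mul, sum_pow_eq_mul_empiricalMoment, sum_pow_eq_mul_empiricalMoment]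
  ring

lemma sum_loopDivDiff_self (x : Fin N → ℝ) (k : ℕ) :
    ∑ i, loopDivDiff k (x i) (x i) =
      N * ((k + 1) * empiricalMoment x k - (k + 2) * empiricalMoment x (k + 1)) := by
  simp only [loopDivDiff, powDivDiff_self, Finset.sum_sub_distrib, ← Finset.mul_sum,
    sum_pow_eq_mul_empiricalMoment]
  push_cast
  ring

lemma sum_sum_loopDivDiff (hN : N ≠ 0) (x : Fin N → ℝ) (k : ℕ) :
    ∑ i, ∑ j, loopDivDiff k (x i) (x j) =
      N ^ 2 * (loopPoly 0 (empiricalMoment x) k - 2 * empiricalMoment x (k + 1)) := by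
  simp only [loopDivDiff, Finset.sum_sub_distrib, sum_sum_powDivDiff, Nat.add_sub_cancel,
    Nat.add_succ_sub_one, sum_range_mul_of_zero_eq_one (empiricalMoment_zero hN x), loopPoly]
  ring

/-- The part of the score of the vector field `t ↦ t ^ (k + 1) - t ^ (k + 2)` that is of lower order
in `N`, divided by `θ N`. -/
noncomputable def loopError (θ : ℝ) (k : ℕ) (m : ℕ → ℝ) : ℝ :=
  θ⁻¹ * ((1 - θ) * ((k + 1) * m k - (k + 2) * m (k + 1)) + (2 - θ) * m (k + 1) - m k)

lemma deformScore_loopDivDiff {θ : ℝ} (hθ : θ ≠ 0) (hN : N ≠ 0) (α M : ℝ) (k : ℕ)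
    (x : Fin N → ℝ) :
    deformScore (loopDivDiff k) (2 * θ) (θ * α) (θ * (M - N) + θ) x =
      θ * N ^ 2 * (loopPoly (α / N) (empiricalMoment x) k -
        (α / N + M / N + 1) * empiricalMoment x (k + 1) +
          (N : ℝ)⁻¹ * loopError θ k (empiricalMoment x)) := by
  have hN' : (N : ℝ) ≠ 0 := by exact_mod_cast hN
  have hcomm (i j : Fin N) : loopDivDiff k (x i) (x j) = loopDivDiff k (x j) (x i) := by
    rw [loopDivDiff, loopDivDiff, powDivDiff_comm, powDivDiff_comm (k + 2)]
  have hpairs := two_mul_sum_lt_eq_sum_sum_sub_sum_diag hcomm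
  rw [sum_sum_loopDivDiff hN] at hpairs
  simp only [deformScore, loopDivDiff_zero_right, loopDivDiff_one_right, Finset.sum_add_distrib,
    ← Finset.mul_sum, Finset.sum_sub_distrib, Finset.sum_neg_distrib,
    sum_pow_eq_mul_empiricalMoment, mul_comm (2 : ℝ) θ, mul_assoc θ, hpairs,
    sum_loopDivDiff_self, loopError]
  simp only [loopPoly]
  field_simp
  ring

lemma hasFDerivAt_empiricalMoment (k : ℕ) (x : Fin N → ℝ) :
    HasFDerivAt (fun x => empiricalMoment x k)
      ((N : ℝ)⁻¹ • ∑ i, (k * x i ^ (k - 1)) • ContinuousLinearMap.proj (R := ℝ) i) x := by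
  have hsum : HasFDerivAt (fun x : Fin N → ℝ => ∑ i, x i ^ k)
      (∑ i, (k * x i ^ (k - 1)) • ContinuousLinearMap.proj (R := ℝ) i) x :=
    HasFDerivAt.fun_sum fun i _ =>
      (hasDerivAt_pow k (x i)).comp_hasFDerivAt x (hasFDerivAt_apply i x)
  simpa only [empiricalMoment, div_eq_inv_mul] using hsum.const_mul (N : ℝ)⁻¹

theorem loop_equation {θ α : ℝ} {M : ℕ} (hθ : 0 < θ) (hα : 0 < α) (hM : N ≤ M) (hN : N ≠ 0)
    (k : ℕ) (c : ℝ) :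
    ∫ x, ((empiricalMoment x (k + 1) - c) *
        (loopPoly (α / N) (empiricalMoment x) k - (α / N + M / N + 1) * empiricalMoment x (k + 1)) +
      (N : ℝ)⁻¹ * ((empiricalMoment x (k + 1) - c) * loopError θ k (empiricalMoment x) +
        (θ * N)⁻¹ * (k + 1) * (empiricalMoment x (2 * k + 1) - empiricalMoment x (2 * k + 2))))
      ∂jacobiEnsemble θ α M N = 0 := by
  have hN' : (N : ℝ) ≠ 0 := by exact_mod_cast hN
  have hSD := (isDividedDifference_loopDivDiff k).schwingerDyson_jacobiEnsemble (by simp) (by simp)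
    hθ hα hM (fun x => (hasFDerivAt_empiricalMoment (k + 1) x).sub_const c) (by fun_prop)
  rw [← mul_zero (θ * (N : ℝ) ^ 2)⁻¹, ← hSD, ← integral_const_mul]
  refine integral_congr_ae (Eventually.of_forall fun x => ?_)
  have hdrift : ((N : ℝ)⁻¹ • ∑ i, (((k + 1 : ℕ) : ℝ) * x i ^ (k + 1 - 1)) •
      ContinuousLinearMap.proj (R := ℝ) i : (Fin N → ℝ) →L[ℝ] ℝ)
        (fun i => x i ^ (k + 1) - x i ^ (k + 2)) =
      (k + 1) * (empiricalMoment x (2 * k + 1) - empiricalMoment x (2 * k + 2)) := by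
    have hterm (i : Fin N) : ((k + 1 : ℕ) : ℝ) * x i ^ k * (x i ^ (k + 1) - x i ^ (k + 2)) =
        (k + 1) * (x i ^ (2 * k + 1) - x i ^ (2 * k + 2)) := by push_cast; ring
    simp only [smul_apply, sum_apply, ContinuousLinearMap.proj_apply, smul_eq_mul,
      Nat.add_sub_cancel, hterm, ← Finset.mul_sum, Finset.sum_sub_distrib,
      sum_pow_eq_mul_empiricalMoment]
    field_simp
  simp only [hdrift, deformScore_loopDivDiff hθ.ne' hN]
  field_simp
  ring

end LoopEquation

section Concentration

variable {Ω : ℕ → Type*} [∀ n, MeasurableSpace (Ω n)] {μ : ∀ n, Measure (Ω n)}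
  {X Y Z W : ∀ n, Ω n → ℝ} {c d : ℝ}

/-- The random variables `X n`, on possibly different probability spaces, share an almost sure
bound. -/
structure UniformlyBounded (μ : ∀ n, Measure (Ω n)) (X : ∀ n, Ω n → ℝ) : Prop where
  aestronglyMeasurable : ∀ n, AEStronglyMeasurable (X n) (μ n)
  exists_bound : ∃ C, ∀ n, ∀ᵐ ω ∂μ n, |X n ω| ≤ C

namespace UniformlyBounded

lemma of_tendsto {x : ℕ → ℝ} (hx : Tendsto x atTop (𝓝 c)) :
    UniformlyBounded μ fun n _ => x n where
  aestronglyMeasurable _ := aestronglyMeasurable_const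
  exists_bound := by
    obtain ⟨C, hC⟩ := (Metric.isBounded_range_of_tendsto x hx).exists_norm_le
    exact ⟨C, fun n => ae_of_all _ fun _ => hC _ ⟨n, rfl⟩⟩

lemma const (c : ℝ) : UniformlyBounded μ fun _ _ => c :=
  of_tendsto tendsto_const_nhds

lemma add (hX : UniformlyBounded μ X) (hY : UniformlyBounded μ Y) :
    UniformlyBounded μ fun n ω => X n ω + Y n ω where
  aestronglyMeasurable n := (hX.1 n).add (hY.1 n)
  exists_bound := by
    obtain ⟨C, hC⟩ := hX.exists_bound
    obtain ⟨C', hC'⟩ := hY.exists_bound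
    refine ⟨C + C', fun n => ?_⟩
    filter_upwards [hC n, hC' n] with ω h h' using (abs_add_le _ _).trans (add_le_add h h')

lemma mul (hX : UniformlyBounded μ X) (hY : UniformlyBounded μ Y) :
    UniformlyBounded μ fun n ω => X n ω * Y n ω where
  aestronglyMeasurable n := (hX.1 n).mul (hY.1 n)
  exists_bound := by
    obtain ⟨C, hC⟩ := hX.exists_bound
    obtain ⟨C', hC'⟩ := hY.exists_bound
    refine ⟨C * C', fun n => ?_⟩
    filter_upwards [hC n, hC' n] with ω h h'
    rw [abs_mul]
    exact mul_le_mul h h' (abs_nonneg _) ((abs_nonneg _).trans h)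

lemma sub (hX : UniformlyBounded μ X) (hY : UniformlyBounded μ Y) :
    UniformlyBounded μ fun n ω => X n ω - Y n ω := by
  simpa only [neg_one_mul, ← sub_eq_add_neg] using hX.add ((const (-1)).mul hY)

variable [∀ n, IsProbabilityMeasure (μ n)]

lemma integrable (hX : UniformlyBounded μ X) (n : ℕ) : Integrable (X n) (μ n) := by
  obtain ⟨C, hC⟩ := hX.exists_bound
  exact .of_bound (hX.aestronglyMeasurable n) C (hC n)

lemma integrable_sq_sub (hX : UniformlyBounded μ X) (c : ℝ) (n : ℕ) :
    Integrable (fun ω => (X n ω - c) ^ 2) (μ n) := by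
  have hsub := hX.sub (.const c)
  simpa only [sq] using (hsub.mul hsub).integrable n

lemma tendsto_mul_integral (hX : UniformlyBounded μ X) {x : ℕ → ℝ}
    (hx : Tendsto x atTop (𝓝 0)) : Tendsto (fun n => x n * ∫ ω, X n ω ∂μ n) atTop (𝓝 0) := by
  obtain ⟨C, hC⟩ := hX.exists_bound
  refine hx.zero_mul_isBoundedUnder_le (isBoundedUnder_of ⟨C, fun n => ?_⟩)
  have hle : ‖∫ ω, X n ω ∂μ n‖ ≤ C * (μ n).real univ := norm_integral_le_of_norm_le_const (hC n)
  simpa using hle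

end UniformlyBounded

/-- Convergence in `L²` of a uniformly bounded sequence of random variables to a constant; the
random variables may live on different probability spaces. -/
structure TendstoL2 (μ : ∀ n, Measure (Ω n)) (X : ∀ n, Ω n → ℝ) (c : ℝ) : Prop where
  uniformlyBounded : UniformlyBounded μ X
  tendsto : Tendsto (fun n => ∫ ω, (X n ω - c) ^ 2 ∂μ n) atTop (𝓝 0)

namespace TendstoL2

variable [∀ n, IsProbabilityMeasure (μ n)]

lemma of_tendsto {x : ℕ → ℝ} (hx : Tendsto x atTop (𝓝 c)) : TendstoL2 μ (fun n _ => x n) c where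
  uniformlyBounded := .of_tendsto hx
  tendsto := by simpa using (hx.sub_const c).pow 2

lemma of_sq_le (hX : TendstoL2 μ X c) (hY : TendstoL2 μ Y d) (hZ : UniformlyBounded μ Z)
    {e A B : ℝ} (hle : ∀ n, ∀ᵐ ω ∂μ n,
      (Z n ω - e) ^ 2 ≤ A * (X n ω - c) ^ 2 + B * (Y n ω - d) ^ 2) : TendstoL2 μ Z e where
  uniformlyBounded := hZ
  tendsto := by
    have hlim := (hX.tendsto.const_mul A).add (hY.tendsto.const_mul B)
    rw [mul_zero, mul_zero, add_zero] at hlim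
    refine squeeze_zero (fun n => integral_nonneg fun ω => sq_nonneg _) (fun n => ?_) hlim
    have hintX := (hX.uniformlyBounded.integrable_sq_sub c n).const_mul A
    have hintY := (hY.uniformlyBounded.integrable_sq_sub d n).const_mul B
    rw [← integral_const_mul, ← integral_const_mul, ← integral_add hintX hintY]
    exact integral_mono_ae (hZ.integrable_sq_sub e n) (hintX.add hintY) (hle n)

lemma add (hX : TendstoL2 μ X c) (hY : TendstoL2 μ Y d) :
    TendstoL2 μ (fun n ω => X n ω + Y n ω) (c + d) :=
  hX.of_sq_le hY (hX.1.add hY.1) (A := 2) (B := 2) fun n => ae_of_all _ fun ω => by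
    linarith [sq_nonneg ((X n ω - c) - (Y n ω - d))]

lemma mul (hX : TendstoL2 μ X c) (hY : TendstoL2 μ Y d) :
    TendstoL2 μ (fun n ω => X n ω * Y n ω) (c * d) := by
  obtain ⟨C, hC⟩ := hX.uniformlyBounded.exists_bound
  refine hX.of_sq_le hY (hX.1.mul hY.1) (A := 2 * d ^ 2) (B := 2 * C ^ 2) fun n => ?_
  filter_upwards [hC n] with ω hω
  have hsq : (X n ω) ^ 2 * (Y n ω - d) ^ 2 ≤ C ^ 2 * (Y n ω - d) ^ 2 :=
    mul_le_mul_of_nonneg_right (sq_le_sq.2 (hω.trans (le_abs_self C))) (sq_nonneg _)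
  calc (X n ω * Y n ω - c * d) ^ 2
      = (X n ω * (Y n ω - d) + d * (X n ω - c)) ^ 2 := by ring
    _ ≤ 2 * (X n ω * (Y n ω - d)) ^ 2 + 2 * (d * (X n ω - c)) ^ 2 := by
      linarith [sq_nonneg (X n ω * (Y n ω - d) - d * (X n ω - c))]
    _ ≤ 2 * d ^ 2 * (X n ω - c) ^ 2 + 2 * C ^ 2 * (Y n ω - d) ^ 2 := by linarith

lemma sub (hX : TendstoL2 μ X c) (hY : TendstoL2 μ Y d) :
    TendstoL2 μ (fun n ω => X n ω - Y n ω) (c - d) := by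
  simpa only [neg_one_mul, ← sub_eq_add_neg] using
    hX.add ((of_tendsto tendsto_const_nhds).mul hY (c := -1))

lemma sum {ι : Type*} {s : Finset ι} {X : ι → ∀ n, Ω n → ℝ} {c : ι → ℝ}
    (hX : ∀ i ∈ s, TendstoL2 μ (X i) (c i)) :
    TendstoL2 μ (fun n ω => ∑ i ∈ s, X i n ω) (∑ i ∈ s, c i) := by
  classical
  induction s using Finset.induction_on with
  | empty => simpa using of_tendsto (μ := μ) (tendsto_const_nhds (x := (0 : ℝ)))
  | insert i s hi ih =>
    simp only [Finset.sum_insert hi]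
    exact (hX i (Finset.mem_insert_self i s)).add
      (ih fun j hj => hX j (Finset.mem_insert_of_mem hj))

lemma tendsto_integral (hX : TendstoL2 μ X c) :
    Tendsto (fun n => ∫ ω, X n ω ∂μ n) atTop (𝓝 c) := by
  have hjensen (n : ℕ) : (∫ ω, X n ω ∂μ n - c) ^ 2 ≤ ∫ ω, (X n ω - c) ^ 2 ∂μ n := by
    have hint := hX.uniformlyBounded.integrable n
    have hle := even_two.convexOn_pow.map_integral_le (continuous_pow 2).continuousOn isClosed_univ
      (ae_of_all _ fun _ => mem_univ _) (hint.sub (integrable_const c))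
      (hX.uniformlyBounded.integrable_sq_sub c n)
    simpa [integral_sub hint (integrable_const c)] using hle
  have hsq := squeeze_zero (fun n => sq_nonneg _) hjensen hX.tendsto
  rw [← tendsto_sub_nhds_zero_iff, tendsto_zero_iff_abs_tendsto_zero]
  simpa [Function.comp_def, Real.sqrt_sq_eq_abs] using hsq.sqrt

/-- As `κ ≥ 1`, the equation bounds `∫ (X - c) ^ 2` by `∫ (X - c) * (Y - κ c)` up to `O(ε)`, and
`Y - κ c → 0`. -/
lemma of_integral_eq_zero {κ ε : ℕ → ℝ} {κ₀ : ℝ} (hX : UniformlyBounded μ X)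
    (hW : UniformlyBounded μ W) (hY : TendstoL2 μ Y (κ₀ * c)) (hκ : Tendsto κ atTop (𝓝 κ₀))
    (hκ_one : ∀ n, 1 ≤ κ n) (hε : Tendsto ε atTop (𝓝 0))
    (hzero : ∀ n, ∫ ω, ((X n ω - c) * (Y n ω - κ n * X n ω) + ε n * W n ω) ∂μ n = 0) :
    TendstoL2 μ X c where
  uniformlyBounded := hX
  tendsto := by
    have hG : TendstoL2 μ (fun n ω => Y n ω - κ n * c) 0 := by
      simpa only [sub_self] using hY.sub (of_tendsto (hκ.mul_const c))
    have hκX := (UniformlyBounded.of_tendsto (μ := μ) hκ).mul hX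
    have hεW := (UniformlyBounded.of_tendsto (μ := μ) hε).mul hW
    have hL := ((hX.sub (.const c)).mul (hY.1.sub hκX)).add hεW
    have hlim := hG.tendsto.add ((hW.tendsto_mul_integral hε).const_mul 2)
    rw [mul_zero, add_zero] at hlim
    refine squeeze_zero (fun n => integral_nonneg fun ω => sq_nonneg _) (fun n => ?_) hlim
    have hintG : Integrable (fun ω => (Y n ω - κ n * c - 0) ^ 2) (μ n) :=
      hG.1.integrable_sq_sub 0 n
    have hintR : Integrable (fun ω => (Y n ω - κ n * c - 0) ^ 2 + 2 * (ε n * W n ω)) (μ n) :=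
      hintG.add ((hεW.integrable n).const_mul 2)
    have hintL := (hL.integrable n).const_mul 2
    calc ∫ ω, (X n ω - c) ^ 2 ∂μ n
        ≤ ∫ ω, ((Y n ω - κ n * c - 0) ^ 2 + 2 * (ε n * W n ω) -
            2 * ((X n ω - c) * (Y n ω - κ n * X n ω) + ε n * W n ω)) ∂μ n :=
          integral_mono (hX.integrable_sq_sub c n) (hintR.sub hintL) fun ω => by
            nlinarith [sq_nonneg (X n ω - c - (Y n ω - κ n * c)),
              mul_nonneg (sub_nonneg.2 (hκ_one n)) (sq_nonneg (X n ω - c))]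
      _ = ∫ ω, (Y n ω - κ n * c - 0) ^ 2 ∂μ n + 2 * (ε n * ∫ ω, W n ω ∂μ n) := by
          rw [integral_sub hintR hintL, integral_const_mul, hzero n, mul_zero, sub_zero,
            integral_add hintG ((hεW.integrable n).const_mul 2), integral_const_mul,
            integral_const_mul]

end TendstoL2

end Concentration

section Moments

/-- The moments of the limit law, determined by the equilibrium equations
`(a + b + 1) m_{k+1} = loopPoly a m k`; the division is by `0` when `a + b + 1 = 0`. -/
noncomputable def limitMoment (a b : ℝ) : ℕ → ℝ
  | 0 => 1
  | k + 1 => (a * limitMoment a b k +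
      ∑ l : Fin (k + 1), limitMoment a b l * limitMoment a b (k - l) -
      ∑ l : Fin k, limitMoment a b (l + 1) * limitMoment a b (k - l)) / (a + b + 1)
termination_by k => k
decreasing_by all_goals omega

lemma limitMoment_zero (a b : ℝ) : limitMoment a b 0 = 1 := by rw [limitMoment]

lemma mul_limitMoment_succ {a b : ℝ} (hab : a + b + 1 ≠ 0) (k : ℕ) :
    (a + b + 1) * limitMoment a b (k + 1) = loopPoly a (limitMoment a b) k := by
  rw [limitMoment, mul_div_cancel₀ _ hab, loopPoly, Finset.sum_range, Finset.sum_range]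

lemma tendstoL2_loopPoly {Ω : ℕ → Type*} [∀ n, MeasurableSpace (Ω n)] {μ : ∀ n, Measure (Ω n)}
    [∀ n, IsProbabilityMeasure (μ n)] {A : ℕ → ℝ} {a : ℝ} {Q : ℕ → ∀ n, Ω n → ℝ} {m : ℕ → ℝ} {k : ℕ}
    (hA : Tendsto A atTop (𝓝 a)) (hQ : ∀ j ≤ k, TendstoL2 μ (Q j) (m j)) :
    TendstoL2 μ (fun n ω => loopPoly (A n) (fun j => Q j n ω) k) (loopPoly a m k) := by
  refine (((TendstoL2.of_tendsto hA).mul (hQ k le_rfl)).add (.sum fun l hl => ?_)).sub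
    (.sum fun l hl => ?_)
  · have hl := Finset.mem_range.1 hl
    exact (hQ l (by omega)).mul (hQ (k - l) (by omega))
  · have hl := Finset.mem_range.1 hl
    exact (hQ (l + 1) (by omega)).mul (hQ (k - l) (by omega))

lemma uniformlyBounded_loopError {Ω : ℕ → Type*} [∀ n, MeasurableSpace (Ω n)]
    {μ : ∀ n, Measure (Ω n)} {Q : ℕ → ∀ n, Ω n → ℝ} {k : ℕ} (hQ : UniformlyBounded μ (Q k))
    (hQ' : UniformlyBounded μ (Q (k + 1))) {θ : ℝ} :
    UniformlyBounded μ fun n ω => loopError θ k fun j => Q j n ω := by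
  have hconst (c : ℝ) := UniformlyBounded.const (μ := μ) c
  exact (hconst _).mul (((((hconst _).mul (((hconst _).mul hQ).sub ((hconst _).mul hQ'))).add
    ((hconst _).mul hQ')).sub hQ))

lemma empiricalMoment_mem_Icc {N : ℕ} {x : Fin N → ℝ} (hx : x ∈ unitCube N) (k : ℕ) :
    empiricalMoment x k ∈ Icc (0 : ℝ) 1 := by
  have hmem (i : Fin N) : x i ∈ Icc (0 : ℝ) 1 := hx i (mem_univ i)
  refine ⟨div_nonneg (Finset.sum_nonneg fun i _ => pow_nonneg (hmem i).1 k) N.cast_nonneg,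
    div_le_one_of_le₀ ?_ N.cast_nonneg⟩
  calc ∑ i, x i ^ k ≤ ∑ _i : Fin N, (1 : ℝ) :=
        Finset.sum_le_sum fun i _ => pow_le_one₀ (hmem i).1 (hmem i).2
    _ = N := by simp

lemma uniformlyBounded_empiricalMoment (θ : ℝ) (α : ℕ → ℝ) (M N : ℕ → ℕ) (k : ℕ) :
    UniformlyBounded (fun n => jacobiEnsemble θ (α n) (M n) (N n))
      fun _ x => empiricalMoment x k where
  aestronglyMeasurable n := by
    unfold empiricalMoment
    exact (by fun_prop : Continuous _).aestronglyMeasurable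
  exists_bound := by
    refine ⟨1, fun n => ?_⟩
    filter_upwards [ae_jacobiEnsemble_mem_unitCube] with x hx
    obtain ⟨hnonneg, hle⟩ := empiricalMoment_mem_Icc hx k
    rwa [abs_of_nonneg hnonneg]

variable {θ a b : ℝ} {α : ℕ → ℝ} {M N : ℕ → ℕ}

theorem tendstoL2_empiricalMoment (hθ : 0 < θ) (hα : ∀ n, 0 < α n) (hM : ∀ n, N n ≤ M n)
    (hN : ∀ n, N n ≠ 0) (hN_lim : Tendsto N atTop atTop) (ha : 0 ≤ a) (hb : 0 ≤ b)
    (hα_lim : Tendsto (fun n => α n / N n) atTop (𝓝 a))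
    (hM_lim : Tendsto (fun n => (M n : ℝ) / N n) atTop (𝓝 b)) (k : ℕ) :
    TendstoL2 (fun n => jacobiEnsemble θ (α n) (M n) (N n)) (fun _ x => empiricalMoment x k)
      (limitMoment a b k) := by
  have hprob (n : ℕ) : IsProbabilityMeasure (jacobiEnsemble θ (α n) (M n) (N n)) :=
    isProbabilityMeasure_jacobiEnsemble hθ (hα n) (hM n)
  have hbdd := uniformlyBounded_empiricalMoment θ α M N
  have hN_inv : Tendsto (fun n => (N n : ℝ)⁻¹) atTop (𝓝 0) :=
    (tendsto_natCast_atTop_atTop.comp hN_lim).inv_tendsto_atTop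
  induction k using Nat.strong_induction_on with
  | _ k ih =>
    rcases k with _ | k
    · simpa only [empiricalMoment_zero (hN _), limitMoment_zero] using
        TendstoL2.of_tendsto tendsto_const_nhds
    have hloop := tendstoL2_loopPoly hα_lim fun j hj => ih j (Nat.lt_succ_of_le hj)
    rw [← mul_limitMoment_succ (by positivity) k] at hloop
    have hθN : Tendsto (fun n => (θ * N n)⁻¹ * (k + 1)) atTop (𝓝 (θ⁻¹ * 0 * (k + 1))) := by
      simpa only [mul_inv] using (hN_inv.const_mul θ⁻¹).mul_const _
    refine .of_integral_eq_zero (hbdd (k + 1)) ?_ hloop ((hα_lim.add hM_lim).add_const 1)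
      (fun n => ?_) hN_inv fun n => loop_equation hθ (hα n) (hM n) (hN n) k _
    · exact (((hbdd (k + 1)).sub (.const _)).mul (uniformlyBounded_loopError (hbdd k)
        (hbdd (k + 1)))).add ((UniformlyBounded.of_tendsto hθN).mul
          ((hbdd (2 * k + 1)).sub (hbdd (2 * k + 2))))
    · have := hα n
      have : 0 ≤ α n / N n + M n / N n := by positivity
      linarith

end Moments

section Residue

open Metric

lemma circleIntegral_zpow_mul_deriv_eq_zero {f f' : ℂ → ℂ} {c : ℂ} {R : ℝ} (hR : 0 ≤ R)
    (hf : ∀ z ∈ sphere c R, HasDerivAt f (f' z) z) (hf_ne : ∀ z ∈ sphere c R, f z ≠ 0) {n : ℤ}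
    (hn : n ≠ -1) : ∮ z in C(c, R), f z ^ n * f' z = 0 := by
  have hn' : (n : ℂ) + 1 ≠ 0 := by exact_mod_cast fun h => hn (eq_neg_of_add_eq_zero_left h)
  refine circleIntegral.integral_eq_zero_of_hasDerivWithinAt
    (f := fun z => f z ^ (n + 1) / (n + 1)) hR fun z hz => HasDerivAt.hasDerivWithinAt ?_
  have hder := ((hasDerivAt_zpow (n + 1) (f z) (.inl (hf_ne z hz))).comp z (hf z hz)).div_const
    ((n : ℂ) + 1)
  refine hder.congr_deriv ?_
  rw [add_sub_cancel_right]
  push_cast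
  field_simp

/-- The product of `z - c` with the part of `deriv ψ / f ^ k` that carries the residue at `c`, where
`f z = (z - c) h z` and `ψ = ∑_{n ≤ k} m_n f ^ n + (z - c) ^ (k + 1) g`; here `w` stands for
`m_k`. -/
noncomputable def residueKernel (c : ℂ) (h g : ℂ → ℂ) (k : ℕ) (w z : ℂ) : ℂ :=
  k * w * ((h z + (z - c) * deriv h z) / h z) +
    (z - c) * (((k + 1) * g z + (z - c) * deriv g z) / h z ^ k)

variable {c : ℂ} {h g ψ : ℂ → ℂ} {m : ℕ → ℂ} {k : ℕ}

lemma differentiableAt_residueKernel {z : ℂ} (hh : AnalyticAt ℂ h z) (hh_ne : h z ≠ 0)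
    (hg : AnalyticAt ℂ g z) (k : ℕ) (w : ℂ) : DifferentiableAt ℂ (residueKernel c h g k w) z := by
  have := hh.differentiableAt
  have := hh.deriv.differentiableAt
  have := hg.differentiableAt
  have := hg.deriv.differentiableAt
  have := pow_ne_zero k hh_ne
  unfold residueKernel
  fun_prop (disch := assumption)

lemma hasDerivAt_sub_mul {z h' : ℂ} (hh : HasDerivAt h h' z) :
    HasDerivAt (fun z => (z - c) * h z) (h z + (z - c) * h') z := by
  simpa only [one_mul] using ((hasDerivAt_id' z).sub_const c).fun_mul hh

lemma deriv_div_pow_eq_sum_add_residueKernel {z : ℂ} (hz : z ≠ c) (hh : DifferentiableAt ℂ h z)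
    (hh_ne : h z ≠ 0) (hg : DifferentiableAt ℂ g z)
    (hψ : ψ =ᶠ[𝓝 z] fun z => ∑ n ∈ Finset.range (k + 1), m n * ((z - c) * h z) ^ n +
      (z - c) ^ (k + 1) * g z) :
    deriv ψ z / ((z - c) * h z) ^ k =
      ∑ n ∈ Finset.range k, n * m n *
          (((z - c) * h z) ^ (n - k - 1 : ℤ) * (h z + (z - c) * deriv h z)) +
        (z - c)⁻¹ * residueKernel c h g k (m k) z := by
  have hzc : z - c ≠ 0 := sub_ne_zero.2 hz
  have hf := hasDerivAt_sub_mul (c := c) hh.hasDerivAt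
  have hf_ne : (z - c) * h z ≠ 0 := mul_ne_zero hzc hh_ne
  have hsum := HasDerivAt.fun_sum (u := Finset.range (k + 1)) fun n _ =>
    (hf.fun_pow n).const_mul (m n)
  have hrem := (((hasDerivAt_id' z).sub_const c).fun_pow (k + 1)).mul hg.hasDerivAt
  have hterm (n : ℕ) : m n * (n * ((z - c) * h z) ^ (n - 1) * (h z + (z - c) * deriv h z)) /
      ((z - c) * h z) ^ k =
        n * m n * (((z - c) * h z) ^ (n - k - 1 : ℤ) * (h z + (z - c) * deriv h z)) := by
    rcases n with _ | n
    · simp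
    · have hexp : ((n + 1 : ℕ) : ℤ) - k - 1 = n - k := by push_cast; ring
      rw [hexp, zpow_sub₀ hf_ne, zpow_natCast, zpow_natCast, Nat.add_sub_cancel]
      ring
  rw [(hψ.hasDerivAt_iff.2 (hsum.add hrem)).deriv, add_div, Finset.sum_div,
    Finset.sum_congr rfl fun n _ => hterm n, Finset.sum_range_succ, add_assoc, residueKernel]
  congr 1
  rw [show (k : ℤ) - k - 1 = -1 by ring, zpow_neg_one, Nat.add_sub_cancel, mul_pow]
  push_cast
  field_simp
  ring

theorem eventually_circleIntegral_deriv_div_pow (hh : AnalyticAt ℂ h c) (hh_ne : h c ≠ 0)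
    (hg : AnalyticAt ℂ g c)
    (hψ : ψ =ᶠ[𝓝 c] fun z => ∑ n ∈ Finset.range (k + 1), m n * ((z - c) * h z) ^ n +
      (z - c) ^ (k + 1) * g z) :
    ∀ᶠ ρ in 𝓝[>] (0 : ℝ), ∮ z in C(c, ρ), deriv ψ z / ((z - c) * h z) ^ k =
      2 * Real.pi * Complex.I * (k * m k) := by
  have hgood := hh.eventually_analyticAt.and ((hh.continuousAt.eventually_ne hh_ne).and
    (hg.eventually_analyticAt.and hψ.eventuallyEq_nhds))
  filter_upwards [nhdsWithin_le_nhds (eventually_closedBall_subset hgood), self_mem_nhdsWithin]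
    with ρ hball hρ
  have hρ : 0 < ρ := hρ
  have hsphere {z : ℂ} (hz : z ∈ sphere c ρ) := hball (sphere_subset_closedBall hz)
  have hz_ne {z : ℂ} (hz : z ∈ sphere c ρ) : z ≠ c := ne_of_mem_sphere hz hρ.ne'
  have hf_ne {z : ℂ} (hz : z ∈ sphere c ρ) : (z - c) * h z ≠ 0 :=
    mul_ne_zero (sub_ne_zero.2 (hz_ne hz)) (hsphere hz).2.1
  have hkernel : DifferentiableOn ℂ (residueKernel c h g k (m k)) (closedBall c ρ) := fun z hz =>
    (differentiableAt_residueKernel (hball hz).1 (hball hz).2.1 (hball hz).2.2.1 k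
      (m k)).differentiableWithinAt
  have hpower (n : ℕ) : ContinuousOn (fun z => n * m n *
      (((z - c) * h z) ^ (n - k - 1 : ℤ) * (h z + (z - c) * deriv h z))) (sphere c ρ) :=
    fun z hz => by
      have := (hsphere hz).1.continuousAt
      have := (hsphere hz).1.deriv.continuousAt
      have hzpow : ContinuousAt (fun z => ((z - c) * h z) ^ (n - k - 1 : ℤ)) z :=
        ContinuousAt.zpow₀ (by fun_prop) _ (.inl (hf_ne hz))
      exact ContinuousAt.continuousWithinAt (by fun_prop)
  rw [circleIntegral.integral_congr hρ.le fun z hz => deriv_div_pow_eq_sum_add_residueKernel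
      (hz_ne hz) (hsphere hz).1.differentiableAt (hsphere hz).2.1
      (hsphere hz).2.2.1.differentiableAt (hsphere hz).2.2.2,
    circleIntegral.integral_add, circleIntegral.integral_fun_sum, Finset.sum_eq_zero, zero_add]
  · simpa [residueKernel, hh_ne] using hkernel.circleIntegral_sub_inv_smul (mem_ball_self hρ)
  · intro n hn
    have hexp : (n - k - 1 : ℤ) ≠ -1 := by have := Finset.mem_range.1 hn; omega
    rw [circleIntegral.integral_const_mul, circleIntegral_zpow_mul_deriv_eq_zero hρ.le
      (fun z hz => hasDerivAt_sub_mul (hsphere hz).1.differentiableAt.hasDerivAt)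
      (fun z hz => hf_ne hz) hexp, mul_zero]
  · exact fun n _ => (hpower n).circleIntegrable hρ.le
  · exact (continuousOn_finsetSum _ fun n _ => hpower n).circleIntegrable hρ.le
  · refine ContinuousOn.circleIntegrable hρ.le (ContinuousOn.mul (ContinuousOn.inv₀ (by fun_prop)
      fun z hz => sub_ne_zero.2 (hz_ne hz)) (hkernel.continuousOn.mono sphere_subset_closedBall))

end Residue

section Contour

open Metric

/-- The quadratic relation `equilibriumQuadric a b u s = 0` between a formal variable `u` and the
generating function `s = ∑ m_n u ^ n` of the limiting moments. -/
def equilibriumQuadric {R : Type*} [CommRing R] (a b u s : R) : R :=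
  u * s * (s + a) - (s - 1) * (s + a + b)

lemma equilibriumQuadric_sub {R : Type*} [CommRing R] (a b u s t : R) :
    equilibriumQuadric a b u s - equilibriumQuadric a b u t =
      (s - t) * (u * (s + t + a) - (s + t + a + b - 1)) := by
  unfold equilibriumQuadric
  ring

variable {a b : ℝ}

open PowerSeries in
lemma equilibriumQuadric_mk_limitMoment (hab : a + b + 1 ≠ 0) :
    equilibriumQuadric (C a) (C b) X (mk (limitMoment a b)) = 0 := by
  have hquad : equilibriumQuadric (C a) (C b) X (mk (limitMoment a b)) =
      X * (mk (limitMoment a b) * mk (limitMoment a b) + C a * mk (limitMoment a b)) -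
        (mk (limitMoment a b) * mk (limitMoment a b) + C (a + b - 1) * mk (limitMoment a b)) +
          C (a + b) := by
    simp only [equilibriumQuadric, map_add, map_sub, map_one]
    ring
  have hsq (n : ℕ) : coeff n (mk (limitMoment a b) * mk (limitMoment a b)) =
      ∑ l ∈ Finset.range (n + 1), limitMoment a b l * limitMoment a b (n - l) := by
    rw [coeff_mul, Finset.Nat.sum_antidiagonal_eq_sum_range_succ_mk]
    simp only [coeff_mk]
  rw [hquad]
  ext n
  rcases n with _ | n
  · simp [limitMoment_zero]
  · have hrec := mul_limitMoment_succ hab n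
    rw [loopPoly] at hrec
    simp only [LinearMap.map_add, LinearMap.map_sub, coeff_succ_X_mul, coeff_C_mul, coeff_C, hsq,
      coeff_mk, sum_range_mul_of_zero_eq_one (limitMoment_zero a b), Nat.succ_ne_zero, if_false,
      LinearMap.map_zero]
    linear_combination -hrec

open Polynomial in
lemma exists_equilibriumQuadric_sum_eq_pow_mul (hab : a + b + 1 ≠ 0) (k : ℕ) :
    ∃ R : ℝ[X], ∀ u : ℂ, equilibriumQuadric (a : ℂ) b u
      (∑ n ∈ Finset.range (k + 1), limitMoment a b n * u ^ n) = u ^ (k + 1) * aeval u R := by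
  set S := PowerSeries.mk (limitMoment a b) with hS
  set P := PowerSeries.trunc (k + 1) S with hP
  have hdvd_series : (PowerSeries.X : PowerSeries ℝ) ^ (k + 1) ∣
      equilibriumQuadric (PowerSeries.C a) (PowerSeries.C b) PowerSeries.X (P : PowerSeries ℝ) := by
    rw [← sub_zero (equilibriumQuadric _ _ _ (P : PowerSeries ℝ)),
      ← equilibriumQuadric_mk_limitMoment hab, equilibriumQuadric_sub]
    refine Dvd.dvd.mul_right (PowerSeries.X_pow_dvd_iff.2 fun n hn => ?_) _
    rw [map_sub, Polynomial.coeff_coe, PowerSeries.coeff_trunc, if_pos hn, sub_self]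
  have hdvd : (X : ℝ[X]) ^ (k + 1) ∣ equilibriumQuadric (C a) (C b) X P := by
    rw [X_pow_dvd_iff]
    simpa [equilibriumQuadric, ← Polynomial.coeff_coe] using
      PowerSeries.X_pow_dvd_iff.1 hdvd_series
  obtain ⟨R, hR⟩ := hdvd
  refine ⟨R, fun u => ?_⟩
  have hPu : aeval u P = ∑ n ∈ Finset.range (k + 1), (limitMoment a b n : ℂ) * u ^ n := by
    rw [aeval_def, hP, PowerSeries.eval₂_trunc_eq_sum_range]
    simp [hS]
  have hRu := congrArg (aeval u) hR
  simpa [equilibriumQuadric, hPu] using hRu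

/-- The local coordinate at `-1` is `u = (v + 1) * contourFactor a b v`; it satisfies
`equilibriumQuadric a b u (-v) = 0`, so that `-v` continues the generating function of the
moments. -/
noncomputable def contourFactor (a b : ℝ) (v : ℂ) : ℂ :=
  (v - a - b) / (v * (v - a))

lemma contourFactor_neg_one_ne_zero (ha : 0 ≤ a) (hb : 0 ≤ b) : contourFactor a b (-1) ≠ 0 := by
  have ha' : (-1 - a : ℂ) ≠ 0 := by exact_mod_cast (by linarith : (-1 - a : ℝ) < 0).ne
  have hab : (-1 - a - b : ℂ) ≠ 0 := by exact_mod_cast (by linarith : (-1 - a - b : ℝ) < 0).ne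
  exact div_ne_zero hab (mul_ne_zero (neg_ne_zero.2 one_ne_zero) ha')

lemma analyticAt_contourFactor (ha : 0 ≤ a) : AnalyticAt ℂ (contourFactor a b) (-1) := by
  have ha' : (-1 - a : ℂ) ≠ 0 := by exact_mod_cast (by linarith : (-1 - a : ℝ) < 0).ne
  unfold contourFactor
  exact AnalyticAt.fun_div (by fun_prop) (by fun_prop) (mul_ne_zero (by simp) ha')

lemma equilibriumQuadric_contourFactor {v : ℂ} (hv : v ≠ 0) (hva : v - a ≠ 0) :
    equilibriumQuadric (a : ℂ) b ((v - -1) * contourFactor a b v) (-v) = 0 := by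
  unfold equilibriumQuadric contourFactor
  field_simp
  ring

lemma exists_neg_eq_sum_limitMoment_add (ha : 0 ≤ a) (hb : 0 ≤ b) (k : ℕ) :
    ∃ g : ℂ → ℂ, AnalyticAt ℂ g (-1) ∧ (fun v => -v) =ᶠ[𝓝 (-1)] fun v =>
      ∑ n ∈ Finset.range (k + 1), limitMoment a b n * ((v - -1) * contourFactor a b v) ^ n +
        (v - -1) ^ (k + 1) * g v := by
  obtain ⟨R, hR⟩ := exists_equilibriumQuadric_sum_eq_pow_mul (by positivity : a + b + 1 ≠ 0) k
  have hcf := analyticAt_contourFactor (b := b) ha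
  set u : ℂ → ℂ := fun v => (v - -1) * contourFactor a b v with hu
  set s : ℂ → ℂ := fun v => ∑ n ∈ Finset.range (k + 1), limitMoment a b n * u v ^ n with hs
  set B : ℂ → ℂ := fun v => u v * (s v + -v + a) - (s v + -v + a + b - 1) with hB
  have hu_an : AnalyticAt ℂ u (-1) := by fun_prop
  have hs_an : AnalyticAt ℂ s (-1) := by fun_prop
  have hB_an : AnalyticAt ℂ B (-1) := by fun_prop
  have hB_ne : B (-1) ≠ 0 := by
    have hs1 : s (-1) = 1 := by simp [hs, hu, Finset.sum_range_succ', limitMoment_zero]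
    have hval : B (-1) = -((1 + a + b : ℝ) : ℂ) := by
      simp only [hB, hs1, hu]
      push_cast
      ring
    rw [hval, neg_ne_zero, Complex.ofReal_ne_zero]
    positivity
  refine ⟨fun v => -(contourFactor a b v ^ (k + 1) * Polynomial.aeval (u v) R / B v),
    ((hcf.pow (k + 1)).mul (hu_an.aeval_polynomial R)).fun_div hB_an hB_ne |>.neg, ?_⟩
  have hv_ne : ∀ᶠ v : ℂ in 𝓝 (-1), v ≠ 0 := eventually_ne_nhds (by simp)
  have hva_ne : ∀ᶠ v : ℂ in 𝓝 (-1), v ≠ a :=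
    eventually_ne_nhds (by exact_mod_cast (by linarith : (-1 : ℝ) < a).ne)
  filter_upwards [hB_an.continuousAt.eventually_ne hB_ne, hv_ne, hva_ne] with v hBv hv hva
  have hfactor := equilibriumQuadric_sub (a : ℂ) b (u v) (s v) (-v)
  rw [hR, equilibriumQuadric_contourFactor hv (sub_ne_zero.2 hva), sub_zero] at hfactor
  change -v = s v + (v - -1) ^ (k + 1) * -(_ / B v)
  field_simp
  rw [← mul_pow, hfactor]
  ring

/-- The integrand of the contour integral for the `k`-th moment. -/
noncomputable def contourIntegrand (a b : ℝ) (k : ℕ) (v : ℂ) : ℂ :=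
  (v / (v + 1) * ((v - a) / (v - a - b))) ^ k

lemma eventually_circleIntegral_contourIntegrand (ha : 0 ≤ a) (hb : 0 ≤ b) (k : ℕ) :
    ∀ᶠ ρ in 𝓝[>] (0 : ℝ), ∮ v in C(-1, ρ), contourIntegrand a b k v =
      -(2 * Real.pi * Complex.I * (k * limitMoment a b k)) := by
  obtain ⟨g, hg, hexp⟩ := exists_neg_eq_sum_limitMoment_add ha hb k
  filter_upwards [eventually_circleIntegral_deriv_div_pow (analyticAt_contourFactor ha)
    (contourFactor_neg_one_ne_zero ha hb) hg hexp] with ρ hρ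
  have hintegrand (v : ℂ) : contourIntegrand a b k v =
      (-1) * (deriv (fun v : ℂ => -v) v / ((v - -1) * contourFactor a b v) ^ k) := by
    rw [deriv_neg, contourIntegrand, contourFactor, neg_one_mul, neg_div, neg_neg, one_div,
      ← inv_pow, mul_inv, inv_div, sub_neg_eq_add]
    congr 1
    ring
  simp only [hintegrand]
  rw [circleIntegral.integral_const_mul, hρ, neg_one_mul]

lemma circleIntegral_contourIntegrand_eq_of_le {ρ r : ℝ} (hρ : 0 < ρ) (hρr : ρ ≤ r)
    (hr : r < 1 + a + b) (k : ℕ) :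
    ∮ v in C(-1, r), contourIntegrand a b k v = ∮ v in C(-1, ρ), contourIntegrand a b k v := by
  have hdiff : ∀ v ∈ closedBall (-1 : ℂ) r \ ball (-1) ρ,
      DifferentiableAt ℂ (contourIntegrand a b k) v := by
    rintro v ⟨hvr, hvρ⟩
    have hv_one : v + 1 ≠ 0 := fun h => hvρ <| by
      rw [eq_neg_of_add_eq_zero_left h]
      exact mem_ball_self hρ
    have hv_ab : v - a - b ≠ 0 := fun h => by
      have hv : v - -1 = ((1 + a + b : ℝ) : ℂ) := by
        push_cast
        linear_combination h
      rw [mem_closedBall, dist_eq_norm, hv, Complex.norm_real] at hvr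
      exact absurd ((le_abs_self _).trans hvr) hr.not_ge
    unfold contourIntegrand
    fun_prop (disch := assumption)
  refine Complex.circleIntegral_eq_of_differentiable_on_annulus_off_countable hρ hρr
    countable_empty (fun v hv => (hdiff v hv).continuousAt.continuousWithinAt) fun v hv => ?_
  exact hdiff v ⟨ball_subset_closedBall hv.1.1, fun h => hv.1.2 (ball_subset_closedBall h)⟩

theorem limitMoment_eq_circleIntegral {r : ℝ} (ha : 0 ≤ a) (hb : 0 ≤ b) (hr : 0 < r)
    (hr' : r < 1 + a + b) {k : ℕ} (hk : k ≠ 0) :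
    (limitMoment a b k : ℂ) = -(1 / (k : ℂ)) * (2 * (Real.pi : ℂ) * Complex.I)⁻¹ *
      ∮ v in C(-1, r), contourIntegrand a b k v := by
  obtain ⟨ρ, hρ_int, hρ, hρr⟩ :=
    ((eventually_circleIntegral_contourIntegrand ha hb k).and (Ioc_mem_nhdsGT hr)).exists
  have hk' : (k : ℂ) ≠ 0 := Nat.cast_ne_zero.2 hk
  rw [circleIntegral_contourIntegrand_eq_of_le hρ hρr hr' k, hρ_int]
  field_simp

end Contour

end BetaJacobi

/-- **Limit shape for a single β-Jacobi ensemble** (the `T = 1` case of the paper's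
Theorem 1.2/5.1): `N⁻¹ E[𝔓_k(y)]` converges to the `k`-th moment of the limit measure,
written as a contour integral around `−1` not enclosing `α̂ + M̂`; the limit is
independent of `θ`. -/
theorem jacobi_law_of_large_numbers
    (θ : ℝ) (hθ : 0 < θ) (α : ℕ → ℝ) (M : ℕ → ℕ)
    (hα : ∀ N : ℕ, 1 ≤ N → 0 < α N) (hM : ∀ N : ℕ, 1 ≤ N → N ≤ M N)
    (αhat Mhat : ℝ) (hαhat : 0 ≤ αhat)
    (hαlim : Filter.Tendsto (fun N : ℕ => α N / (N : ℝ)) Filter.atTop (nhds αhat))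
    (hMlim : Filter.Tendsto (fun N : ℕ => (M N : ℝ) / (N : ℝ)) Filter.atTop (nhds Mhat))
    (k : ℕ) (hk : 0 < k) (r : ℝ) (hr : 0 < r) (hr' : r < 1 + αhat + Mhat) :
    Filter.Tendsto
      (fun N : ℕ => ((N : ℂ))⁻¹ *
        ((∫ y, ∑ j : Fin N, (y j) ^ k ∂ jacobiEnsemble θ (α N) (M N) N : ℝ) : ℂ))
      Filter.atTop
      (nhds (-(1 / (k : ℂ)) * (2 * (Real.pi : ℂ) * Complex.I)⁻¹ *
        (∮ v in C(-1, r),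
          (v / (v + 1) * ((v - (αhat : ℂ)) / (v - αhat - Mhat))) ^ k))) := by
  have hMhat : 0 ≤ Mhat := ge_of_tendsto' hMlim fun N => by positivity
  have hL2 := BetaJacobi.tendstoL2_empiricalMoment (N := (· + 1)) hθ
    (fun n => hα (n + 1) n.succ_pos) (fun n => hM (n + 1) n.succ_pos) (fun n => n.succ_ne_zero)
    (Filter.tendsto_add_atTop_nat 1) hαhat hMhat (hαlim.comp (Filter.tendsto_add_atTop_nat 1))
    (hMlim.comp (Filter.tendsto_add_atTop_nat 1)) k
  have hprob (n : ℕ) := BetaJacobi.isProbabilityMeasure_jacobiEnsemble hθ (hα (n + 1) n.succ_pos)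
    (hM (n + 1) n.succ_pos)
  change Filter.Tendsto _ _
    (nhds (_ * ∮ v in C(-1, r), BetaJacobi.contourIntegrand αhat Mhat k v))
  rw [← BetaJacobi.limitMoment_eq_circleIntegral hαhat hMhat hr hr' hk.ne',
    ← Filter.tendsto_add_atTop_iff_nat 1]
  refine (Complex.continuous_ofReal.tendsto _ |>.comp hL2.tendsto_integral).congr fun n => ?_
  simp only [Function.comp_apply, BetaJacobi.empiricalMoment, div_eq_inv_mul, integral_const_mul,
    Complex.ofReal_mul, Complex.ofReal_inv, Complex.ofReal_natCast]
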